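/- There exists a sequence (G_k)_{k≥2} of finite transitive imprimitive permutation groups, with G_k acting on a set T_k of size n_k, together with nontrivial block partitions 𝓑_k for G_k, such that |G_k| → ∞ and the ratio |U_{G_k⋌𝓑_k}| / |G_k| converges to 1 as k → ∞. For example, one may take G_k ≤ S_{k²} generated by the k disjoint k-cycles (1+ℓk, 2+ℓk, …, k+ℓk) for ℓ = 0,…,k−1 together with a permutation inducing a transitive action on the block partition 𝓑_k := {{1+ℓk, …, k+ℓk} : ℓ = 0,…,k−1}. -/

import Mathlib

/-!
The groups are the full imprimitive wreath products `S_m ≀ S_2`, `m = k + 2`: all permutations of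
`2 * m` points that preserve the partition into two blocks of size `m`, this partition serving as
the block partition.

A restriction `θ|_B` does not change when `θ` is precomposed with any of the `m!` permutations
supported on the block other than `B`. Hence the pairs (point of some `D^μ`, permutation of `m`
letters) inject into `T × G` (`card_cells_mul_factorial_le`), so `|⋃ D^μ| * m! ≤ 2 * m * |G|`.
Since also `m! ≤ |G|`, the fence, the copy of `T` and the sets `D^μ` together have at most
`8 * m / m! * |G| = 8 / (m - 1)! * |G|` points, and the ratio tends to `1`.
-/

/-- The set of restrictions `θ|_B` (as functions `B → Fin n`) of elements `θ ∈ G`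
to blocks `B ∈ 𝓑`, i.e. `⋃_{B ∈ 𝓑} G|_B`. -/
def Restr (n : ℕ) (G : Subgroup (Equiv.Perm (Fin n))) (𝓑 : Set (Set (Fin n))) :
    Set ((B : Set (Fin n)) × (B → Fin n)) :=
  { p | p.1 ∈ 𝓑 ∧ ∃ θ ∈ G, p.2 = fun x => θ x.1 }

/-- The underlying set of the ordered set `U_{G⋌𝓑}`:
the fence `F = {ℓ_1,u_1,…,ℓ_n,u_n}` (constructors `low`, `up`), the copy of `G`
(constructor `grp`), the sets `D^μ = dom(μ) × {μ}` (constructor `cell`), and the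
copy of `T = {1,…,n}` (constructor `pt`). -/
inductive UPt (n : ℕ) (G : Subgroup (Equiv.Perm (Fin n))) (𝓑 : Set (Set (Fin n))) where
  | low : Fin n → UPt n G 𝓑
  | up : Fin n → UPt n G 𝓑
  | grp : G → UPt n G 𝓑
  | cell : (μ : Restr n G 𝓑) → (j : μ.1.1) → UPt n G 𝓑
  | pt : Fin n → UPt n G 𝓑

/-- The generating strict comparabilities of `U_{G⋌𝓑}`:
`ℓ_i < u_i`, `ℓ_{i+1} < u_i`, `u_j < (j,μ)`, `(j,μ) < μ(j)`, and `θ < (j, θ|_B)`. -/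
inductive UStep (n : ℕ) (G : Subgroup (Equiv.Perm (Fin n))) (𝓑 : Set (Set (Fin n))) :
    UPt n G 𝓑 → UPt n G 𝓑 → Prop where
  | fence_eq (i : Fin n) : UStep n G 𝓑 (.low i) (.up i)
  | fence_succ (i j : Fin n) (h : (j : ℕ) = (i : ℕ) + 1) : UStep n G 𝓑 (.low j) (.up i)
  | up_cell (μ : Restr n G 𝓑) (j : μ.1.1) : UStep n G 𝓑 (.up j.1) (.cell μ j)
  | cell_pt (μ : Restr n G 𝓑) (j : μ.1.1) : UStep n G 𝓑 (.cell μ j) (.pt (μ.1.2 j))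
  | grp_cell (θ : G) (μ : Restr n G 𝓑) (j : μ.1.1)
      (h : ∀ x : μ.1.1, μ.1.2 x = (θ : Equiv.Perm (Fin n)) x.1) :
      UStep n G 𝓑 (.grp θ) (.cell μ j)

/-- Rank function used to prove antisymmetry of the generated order. -/
def UPt.rank {n : ℕ} {G : Subgroup (Equiv.Perm (Fin n))} {𝓑 : Set (Set (Fin n))} :
    UPt n G 𝓑 → ℕ
  | .low _ => 0
  | .grp _ => 0
  | .up _ => 1
  | .cell _ _ => 2
  | .pt _ => 3

theorem UStep.rank_lt {n : ℕ} {G : Subgroup (Equiv.Perm (Fin n))} {𝓑 : Set (Set (Fin n))}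
    {x y : UPt n G 𝓑} (h : UStep n G 𝓑 x y) : x.rank < y.rank := by
  cases h <;> simp [UPt.rank]

/-- The order of `U_{G⋌𝓑}`: the reflexive-transitive closure of the generating
comparabilities. -/
instance UPt.instPartialOrder (n : ℕ) (G : Subgroup (Equiv.Perm (Fin n)))
    (𝓑 : Set (Set (Fin n))) : PartialOrder (UPt n G 𝓑) where
  le := Relation.ReflTransGen (UStep n G 𝓑)
  le_refl _ := Relation.ReflTransGen.refl
  le_trans _ _ _ := Relation.ReflTransGen.trans
  le_antisymm a b hab hba := by
    have mono : ∀ {x y : UPt n G 𝓑}, Relation.ReflTransGen (UStep n G 𝓑) x y →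
        x.rank ≤ y.rank := by
      intro x y h
      induction h with
      | refl => exact le_rfl
      | tail _ h2 ih => exact ih.trans h2.rank_lt.le
    rcases hab.cases_head with h | ⟨c, hc, hcb⟩
    · exact h
    rcases hba.cases_head with h | ⟨d, hd, hda⟩
    · exact h.symm
    have h1 := hc.rank_lt
    have h2 := mono hcb
    have h3 := hd.rank_lt
    have h4 := mono hda
    omega

/-- `B` is a block for `G`: for every `σ ∈ G`, `σ[B] ∩ B ≠ ∅` implies `σ[B] = B`. -/
def IsBlockOf (n : ℕ) (G : Subgroup (Equiv.Perm (Fin n))) (B : Set (Fin n)) : Prop :=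
  ∀ σ ∈ G, ((σ : Equiv.Perm (Fin n)) '' B ∩ B).Nonempty → (σ : Equiv.Perm (Fin n)) '' B = B

/-- A block partition `𝓑 = ⋃_{j=1}^ℓ G·B_j` for `G` with orbit cut `{B_1,…,B_ℓ}`
(the `B_j` are the `cut j`): the `B_j` are nonempty blocks, the family of all images
`σ[B_i]` (`σ ∈ G`) partitions `{1,…,n}`, and distinct members of the orbit cut lie in
distinct `G`-orbits of blocks. -/
structure BlockPartition (n : ℕ) (G : Subgroup (Equiv.Perm (Fin n))) where
  ℓ : ℕ
  cut : Fin ℓ → Set (Fin n)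
  nonempty_cut : ∀ i, (cut i).Nonempty
  isBlock_cut : ∀ i, IsBlockOf n G (cut i)
  partitions : ∀ x : Fin n,
    ∃! C : Set (Fin n), (∃ i, ∃ σ ∈ G, (σ : Equiv.Perm (Fin n)) '' cut i = C) ∧ x ∈ C
  cut_distinct_orbits : ∀ i j : Fin ℓ, ∀ σ ∈ G,
    (σ : Equiv.Perm (Fin n)) '' cut i = cut j → i = j

/-- The block partition `𝓑 = ⋃_{j=1}^ℓ G·B_j` as a set of subsets of `{1,…,n}`. -/
def BlockPartition.blocks {n : ℕ} {G : Subgroup (Equiv.Perm (Fin n))}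
    (P : BlockPartition n G) : Set (Set (Fin n)) :=
  { C | ∃ i, ∃ σ ∈ G, (σ : Equiv.Perm (Fin n)) '' P.cut i = C }

/-- Composition `σ ∘ μ` of a restriction `μ = θ|_B` with `σ ∈ G`; this is the
restriction `(σθ)|_B`. -/
def Restr.comp {n : ℕ} {G : Subgroup (Equiv.Perm (Fin n))} {𝓑 : Set (Set (Fin n))}
    (σ : G) (μ : Restr n G 𝓑) : Restr n G 𝓑 :=
  ⟨⟨μ.1.1, fun x => (σ : Equiv.Perm (Fin n)) (μ.1.2 x)⟩, by
    obtain ⟨hB, θ, hθ, hf⟩ := μ.2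
    refine ⟨hB, (σ : Equiv.Perm (Fin n)) * θ, mul_mem σ.2 hθ, ?_⟩
    funext x
    simp [hf]⟩

/-! ### The wreath product of `S_m` by `S_2` -/

/-- The index of the block (out of two blocks of size `m`) containing a point. -/
def color (m : ℕ) (x : Fin (2 * m)) : Fin 2 := (finProdFinEquiv.symm x).1

/-- The wreath product `S_m ≀ S_2`: the permutations preserving the partition into the two
fibres of `color`. -/
def wreath (m : ℕ) : Subgroup (Equiv.Perm (Fin (2 * m))) where
  carrier := {σ | ∀ a b, color m (σ a) = color m (σ b) ↔ color m a = color m b}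
  one_mem' := by simp
  mul_mem' {σ τ} hσ hτ a b := by
    simpa using (hσ (τ a) (τ b)).trans (hτ a b)
  inv_mem' {σ} hσ a b := by
    simpa using (hσ (σ⁻¹ a) (σ⁻¹ b)).symm

theorem mem_wreath {m : ℕ} {σ : Equiv.Perm (Fin (2 * m))} :
    σ ∈ wreath m ↔ ∀ a b, color m (σ a) = color m (σ b) ↔ color m a = color m b := Iff.rfl

/-- The permutation acting as `π` on the block of index `c` and trivially on the other one. -/
def twist (m : ℕ) (c : Fin 2) (π : Equiv.Perm (Fin m)) : Equiv.Perm (Fin (2 * m)) :=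
  finProdFinEquiv.permCongr (Equiv.Perm.prodExtendRight c π)

theorem color_twist (m : ℕ) (c : Fin 2) (π : Equiv.Perm (Fin m)) (x : Fin (2 * m)) :
    color m (twist m c π x) = color m x := by
  simp [color, twist, Equiv.permCongr_apply]

theorem twist_mem (m : ℕ) (c : Fin 2) (π : Equiv.Perm (Fin m)) : twist m c π ∈ wreath m := by
  simp [mem_wreath, color_twist]

theorem twist_apply_of_ne (m : ℕ) (c : Fin 2) (π : Equiv.Perm (Fin m)) (x : Fin (2 * m))
    (h : color m x ≠ c) : twist m c π x = x := by
  have := Equiv.Perm.prodExtendRight_apply_ne (e := π) h (finProdFinEquiv.symm x).2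
  rw [twist, Equiv.permCongr_apply]
  apply finProdFinEquiv.symm.injective
  rw [Equiv.symm_apply_apply]
  exact this

theorem twist_injective (m : ℕ) (c : Fin 2) : Function.Injective (twist m c) := by
  intro π ρ h
  have h' := finProdFinEquiv.permCongr.injective h
  ext i
  have := Equiv.congr_fun h' (c, i)
  simpa using congrArg (fun p : Fin 2 × Fin m => (p.2 : ℕ)) this

theorem wreath_transitive (m : ℕ) (a b : Fin (2 * m)) : ∃ σ ∈ wreath m, σ a = b := by
  refine ⟨finProdFinEquiv.permCongr (Equiv.prodCongr
    (Equiv.swap (finProdFinEquiv.symm a).1 (finProdFinEquiv.symm b).1)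
    (Equiv.swap (finProdFinEquiv.symm a).2 (finProdFinEquiv.symm b).2)), ?_, ?_⟩
  · intro x y
    simp [color, Equiv.permCongr_apply]
  · rw [Equiv.permCongr_apply]
    apply finProdFinEquiv.symm.injective
    rw [Equiv.symm_apply_apply]
    simp [Equiv.prodCongr_apply]

theorem image_fibre {m : ℕ} {σ : Equiv.Perm (Fin (2 * m))} (hσ : σ ∈ wreath m)
    (x : Fin (2 * m)) :
    σ '' {y | color m y = color m x} = {y | color m y = color m (σ x)} := by
  ext y
  constructor
  · rintro ⟨z, hz, rfl⟩
    exact (hσ z x).2 hz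
  · intro hy
    refine ⟨σ.symm y, ?_, by simp⟩
    exact (hσ _ _).1 (by simpa using hy)

/-! ### The block partition -/

/-- The first point, which represents the block of index `0`. -/
def basePt (k : ℕ) : Fin (2 * (k + 2)) := ⟨0, by omega⟩

/-- The partition into the two fibres of `color`, given as the orbit of the fibre through
`basePt`. -/
def wreathPartition (k : ℕ) : BlockPartition (2 * (k + 2)) (wreath (k + 2)) where
  ℓ := 1
  cut _ := {y | color (k + 2) y = color (k + 2) (basePt k)}
  nonempty_cut _ := ⟨basePt k, rfl⟩
  isBlock_cut _ := by
    intro σ hσ h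
    rw [image_fibre hσ] at h ⊢
    obtain ⟨y, h1, h2⟩ := h
    have h3 : color (k + 2) (σ (basePt k)) = color (k + 2) (basePt k) := h1.symm.trans h2
    rw [h3]
  partitions x := by
    obtain ⟨σ, hσ, hx⟩ := wreath_transitive (k + 2) (basePt k) x
    refine ⟨{y | color (k + 2) y = color (k + 2) x},
      ⟨⟨0, σ, hσ, by rw [image_fibre hσ, hx]⟩, rfl⟩, ?_⟩
    rintro C ⟨⟨_, τ, hτ, rfl⟩, hxC⟩
    rw [image_fibre hτ] at hxC ⊢
    have h : color (k + 2) x = color (k + 2) (τ (basePt k)) := hxC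
    rw [h]
  cut_distinct_orbits i j _ _ _ := Subsingleton.elim i j

theorem wreathPartition_block_eq {k : ℕ} {C : Set (Fin (2 * (k + 2)))}
    (hC : C ∈ (wreathPartition k).blocks) {x : Fin (2 * (k + 2))} (hx : x ∈ C) :
    C = {y | color (k + 2) y = color (k + 2) x} := by
  obtain ⟨_, τ, hτ, rfl⟩ := hC
  change x ∈ τ '' {y | color (k + 2) y = color (k + 2) (basePt k)} at hx
  change τ '' {y | color (k + 2) y = color (k + 2) (basePt k)} = _
  rw [image_fibre hτ] at hx ⊢
  have h : color (k + 2) x = color (k + 2) (τ (basePt k)) := hx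
  rw [h]

theorem card_fibre (m : ℕ) (c : Fin 2) : Nat.card {y | color m y = c} = m := by
  have e : {y | color m y = c} ≃ Fin m :=
    { toFun := fun y => (finProdFinEquiv.symm y.1).2
      invFun := fun i => ⟨finProdFinEquiv (c, i),
        congrArg Prod.fst (finProdFinEquiv.symm_apply_apply (c, i))⟩
      left_inv := by
        rintro ⟨y, rfl⟩
        apply Subtype.ext
        exact finProdFinEquiv.apply_symm_apply y
      right_inv := fun i => congrArg Prod.snd (finProdFinEquiv.symm_apply_apply (c, i)) }
  simpa using Nat.card_congr e

/-! ### Counting the points of `U_{G⋌𝓑}` -/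

/-- The disjoint union `⋃_μ D^μ` of the underlying set of `U_{G⋌𝓑}`. -/
abbrev Cells (k : ℕ) : Type :=
  (μ : Restr (2 * (k + 2)) (wreath (k + 2)) (wreathPartition k).blocks) × μ.1.1

/-- Choosing an extension `θ_μ ∈ G` of each restriction `μ`, the map sending `(μ, j)` and `π` to
`j` and the product of `θ_μ` with the copy of `π` on the block avoiding `j` is injective: `j`
determines `dom μ`, the product restricts to `μ` there, and cancelling `θ_μ` gives back `π`. -/
theorem card_cells_mul_factorial_le (k : ℕ) :
    Nat.card (Cells k) * (k + 2).factorial ≤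
      2 * (k + 2) * Nat.card (wreath (k + 2)) := by
  have hext : ∀ μ : Restr (2 * (k + 2)) (wreath (k + 2)) (wreathPartition k).blocks,
      ∃ θ ∈ wreath (k + 2), μ.1.2 = fun x => θ x.1 := fun μ => μ.2.2
  choose θ hθ hμ using hext
  let F : Cells k × Equiv.Perm (Fin (k + 2)) → Fin (2 * (k + 2)) × wreath (k + 2) :=
    fun p => (p.1.2.1, ⟨θ p.1.1 * twist (k + 2) (color (k + 2) p.1.2.1 + 1) p.2,
      mul_mem (hθ _) (twist_mem _ _ _)⟩)
  have hne : ∀ c : Fin 2, c ≠ c + 1 := by decide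
  have hF : Function.Injective F := by
    rintro ⟨⟨⟨⟨B, f⟩, hB⟩, j, hj⟩, π⟩ ⟨⟨⟨⟨B', f'⟩, hB'⟩, j', hj'⟩, π'⟩ h
    obtain ⟨h1, h2⟩ := Prod.ext_iff.1 h
    change j = j' at h1
    subst h1
    have h3 := congrArg Subtype.val h2
    have eB : B = {y | color (k + 2) y = color (k + 2) j} := wreathPartition_block_eq hB.1 hj
    have eB' : B = B' := eB.trans (wreathPartition_block_eq hB'.1 hj').symm
    subst eB'
    have hf : f = f' := by
      funext x
      have hx : color (k + 2) x.1 = color (k + 2) j :=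
        (Set.ext_iff.1 eB x.1).1 x.2
      have h4 := Equiv.congr_fun h3 x.1
      simp only [F, Equiv.Perm.mul_apply] at h4
      rw [twist_apply_of_ne _ _ _ _ (hx ▸ hne _), twist_apply_of_ne _ _ _ _ (hx ▸ hne _)] at h4
      have e1 := congrFun (hμ ⟨⟨B, f⟩, hB⟩) x
      have e2 := congrFun (hμ ⟨⟨B, f'⟩, hB'⟩) x
      exact e1.trans (h4.trans e2.symm)
    subst hf
    have hπ : π = π' := twist_injective _ _ (mul_left_cancel h3)
    rw [hπ]
  have := Nat.card_le_card_of_injective F hF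
  simpa [Nat.card_prod, Fintype.card_perm] using this

theorem factorial_le_card_wreath (m : ℕ) : m.factorial ≤ Nat.card (wreath m) := by
  have := Nat.card_le_card_of_injective
    (fun π : Equiv.Perm (Fin m) => (⟨twist m 0 π, twist_mem m 0 π⟩ : wreath m))
    (fun _ _ h => twist_injective m 0 (congrArg Subtype.val h))
  simpa [Fintype.card_perm] using this

theorem card_UPt (k : ℕ) :
    Nat.card (UPt (2 * (k + 2)) (wreath (k + 2)) (wreathPartition k).blocks) =
      Nat.card (wreath (k + 2)) + (Nat.card (Cells k) + 3 * (2 * (k + 2))) := by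
  let e : UPt (2 * (k + 2)) (wreath (k + 2)) (wreathPartition k).blocks ≃
      wreath (k + 2) ⊕ Cells k ⊕ Fin (2 * (k + 2)) ⊕ Fin (2 * (k + 2)) ⊕ Fin (2 * (k + 2)) :=
    { toFun := fun x => match x with
        | .grp g => .inl g
        | .cell μ j => .inr (.inl ⟨μ, j⟩)
        | .low i => .inr (.inr (.inl i))
        | .up i => .inr (.inr (.inr (.inl i)))
        | .pt i => .inr (.inr (.inr (.inr i)))
      invFun := fun x => match x with
        | .inl g => .grp g
        | .inr (.inl c) => .cell c.1 c.2
        | .inr (.inr (.inl i)) => .low i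
        | .inr (.inr (.inr (.inl i))) => .up i
        | .inr (.inr (.inr (.inr i))) => .pt i
      left_inv := by rintro (_ | _ | _ | _ | _) <;> rfl
      right_inv := by rintro (_ | _ | _ | _ | _) <;> rfl }
  rw [Nat.card_congr e]
  simp only [Nat.card_sum, Nat.card_fin]
  ring

/-! ### The sequence and its limit -/

/-- There is a sequence of finite transitive imprimitive permutation groups
`G_k` (on `n_k` points), with nontrivial block partitions `𝓑_k`, such that `|G_k| → ∞` and
`|U_{G_k⋌𝓑_k}| / |G_k| → 1` as `k → ∞`. -/
theorem compact_representation_sequence :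
    ∃ (nk : ℕ → ℕ) (Gk : ∀ k : ℕ, Subgroup (Equiv.Perm (Fin (nk k))))
      (Pk : ∀ k : ℕ, BlockPartition (nk k) (Gk k)),
      (∀ k, ∀ a b : Fin (nk k), ∃ σ ∈ Gk k, (σ : Equiv.Perm (Fin (nk k))) a = b) ∧
      (∀ k, ∃ B ∈ (Pk k).blocks, Nat.card B ≠ 1 ∧ Nat.card B ≠ nk k) ∧
      Filter.Tendsto (fun k => Nat.card (Gk k)) Filter.atTop Filter.atTop ∧
      Filter.Tendsto
        (fun k => (Nat.card (UPt (nk k) (Gk k) (Pk k).blocks) : ℝ) / (Nat.card (Gk k) : ℝ))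
        Filter.atTop (nhds 1) := by
  refine ⟨fun k => 2 * (k + 2), fun k => wreath (k + 2), wreathPartition,
    fun k => wreath_transitive (k + 2), fun k => ?_, ?_, ?_⟩
  · refine ⟨{y | color (k + 2) y = color (k + 2) (basePt k)},
      ⟨(0 : Fin 1), 1, one_mem _, by simp [wreathPartition]⟩, ?_⟩
    rw [card_fibre]
    beta_reduce
    constructor <;> omega
  · refine Filter.tendsto_atTop_mono (fun k => ?_) Filter.tendsto_id
    calc k ≤ k + 2 := by omega
      _ ≤ (k + 2).factorial := Nat.self_le_factorial _
      _ ≤ _ := factorial_le_card_wreath _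
  · have hlim : Filter.Tendsto (fun k : ℕ => 1 + 8 * (1 / ((k : ℝ) + 1)))
        Filter.atTop (nhds 1) := by
      simpa using (tendsto_one_div_add_atTop_nhds_zero_nat (𝕜 := ℝ)).const_mul 8 |>.const_add 1
    refine tendsto_of_tendsto_of_tendsto_of_le_of_le tendsto_const_nhds hlim
      (fun k => ?_) (fun k => ?_)
    all_goals
      have hfac := factorial_le_card_wreath (k + 2)
      have hpos : (0 : ℝ) < Nat.card (wreath (k + 2)) := by
        exact_mod_cast (Nat.factorial_pos _).trans_le hfac
      have hU := card_UPt k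
    · simp only
      rw [le_div_iff₀ hpos, hU]
      push_cast
      nlinarith
    · have hcells := card_cells_mul_factorial_le k
      have hk : k + 1 ≤ (k + 1).factorial := Nat.self_le_factorial _
      rw [Nat.factorial_succ (k + 1)] at hfac hcells
      -- Cancelling `k + 2` in `|Cells| * (k + 2)! ≤ 2 * (k + 2) * |G|` leaves a bound by `(k + 1)!`.
      have hcells' : Nat.card (Cells k) * (k + 1).factorial ≤ 2 * Nat.card (wreath (k + 2)) := by
        refine Nat.le_of_mul_le_mul_left (c := k + 2) ?_ (Nat.succ_pos _)
        calc _ = Nat.card (Cells k) * ((k + 1 + 1) * (k + 1).factorial) := by ring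
          _ ≤ _ := hcells
          _ = _ := by ring
      have hmain : (Nat.card (Cells k) + 3 * (2 * (k + 2))) * (k + 1) ≤
          8 * Nat.card (wreath (k + 2)) := by
        have h1 := Nat.mul_le_mul_left (Nat.card (Cells k)) hk
        have h2 := Nat.mul_le_mul_left (k + 2) hk
        nlinarith
      have hmain' : ((Nat.card (Cells k) : ℝ) + 3 * (2 * (k + 2))) * (k + 1) ≤
          8 * Nat.card (wreath (k + 2)) := by exact_mod_cast hmain
      simp only
      rw [div_le_iff₀ hpos, hU]
      push_cast
      have hk0 : (0 : ℝ) < (k : ℝ) + 1 := by positivity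
      have := (le_div_iff₀ hk0).2 hmain'
      calc _ ≤ (Nat.card (wreath (k + 2)) : ℝ) + 8 * Nat.card (wreath (k + 2)) / ((k : ℝ) + 1) := by
            gcongr
        _ = _ := by ring
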